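/- Let Q be an n×n real symmetric positive definite matrix with spectral condition number k_Q, and let 0 < γ_lower ≤ γ_upper be real numbers satisfying (1/(2 γ_upper ‖Q‖₂)) · ( (√k_Q + 1)²/√k_Q − (γ_upper/γ_lower) · (√k_Q − 1)²/√k_Q ) > 1. If Γ is a diagonal matrix whose diagonal entries all lie in the interval [γ_lower, γ_upper], then ‖I − ΓQ‖₂ < 1. -/

import Mathlib

/-!
Since `(1 - Γ * Q)ᵀ = 1 - Q * Γ`, it is enough to bound the norm of `1 - Q * Γ`. By compactness of
the unit sphere this amounts to `‖x - QΓx‖ < ‖x‖` for `x ≠ 0`, and with `w = Γx`, `u = Qw` that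
inequality reads `‖u‖² < 2 ∑ i, w i * u i / γ i`.

Put `β₁ = 1/γupper`, `β₂ = 1/γlower`, `c = (β₁ + β₂)/2`, `d = (β₂ - β₁)/2`. As `1/γ i ∈ [β₁, β₂]`,
Cauchy-Schwarz gives `∑ w i * u i / γ i ≥ c ⟨w, u⟩ - d ‖w‖ ‖u‖`. With `L`, `m` the extreme
eigenvalues of `Q`, the relation `(Q - m)(L - Q) ≥ 0` gives the Kantorovich-type bound
`‖u‖² + L m ‖w‖² ≤ (L + m) ⟨w, u⟩`, and `‖u‖ ≤ L ‖w‖`. The condition on `γlower`, `γupper` says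
`d (s² + 1) < s (2c - L)` with `s = √(L/m)`; together these facts finish the proof by completing
a square (`scalar_ineq`).
-/

open Matrix Filter Topology

variable {n : ℕ}

/-- Largest eigenvalue of a Hermitian real matrix. -/
noncomputable def maxEig {M : Matrix (Fin n) (Fin n) ℝ} (hM : M.IsHermitian) : ℝ :=
  ⨆ i, hM.eigenvalues i

/-- Smallest eigenvalue of a Hermitian real matrix. -/
noncomputable def minEig {M : Matrix (Fin n) (Fin n) ℝ} (hM : M.IsHermitian) : ℝ :=
  ⨅ i, hM.eigenvalues i

/-- Spectral norm (ℓ² operator norm) of a real matrix. -/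
noncomputable def spec (M : Matrix (Fin n) (Fin n) ℝ) : ℝ :=
  ‖LinearMap.toContinuousLinearMap (Matrix.toEuclideanLin M)‖

/-- Euclidean norm of a vector. -/
noncomputable def enorm2 (v : Fin n → ℝ) : ℝ :=
  Real.sqrt (∑ i, v i ^ 2)

/-- The scalar core: `W`, `U`, `T` play the roles of `‖w‖`, `‖Qw‖`, `⟨w, Qw⟩`, while `m` and
`m * s ^ 2` are the extreme eigenvalues of `Q`. -/
lemma scalar_ineq {m s c d W U T : ℝ} (hm : 0 < m) (hs : 0 < s) (hd : 0 ≤ d)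
    (hW : 0 < W) (hU : 0 < U)
    (hcond : d * (s ^ 2 + 1) < s * (2 * c - m * s ^ 2))
    (hK : U ^ 2 + (m * s ^ 2) * m * W ^ 2 ≤ (m * s ^ 2 + m) * T)
    (hUL : U ≤ m * s ^ 2 * W) : U ^ 2 < 2 * (c * T - d * (W * U)) := by
  have hc : m * s ^ 2 < 2 * c := by
    have h : 0 < s * (2 * c - m * s ^ 2) := lt_of_le_of_lt (by positivity) hcond
    linarith [(pos_iff_pos_of_mul_pos h).mp hs]
  have hc0 : 0 < c := by nlinarith [show 0 < m * s ^ 2 by positivity]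
  -- Substituting `hK` and `hcond` leaves `2c (U - m s W)² + 2 m s (m s²) W U`; since `2c > m s²`,
  -- this is at least `m s² (U² + m² s² W²)`, and `hUL` bounds the last term from below.
  have h1 := mul_le_mul_of_nonneg_left hK (show 0 ≤ 2 * c by linarith)
  have h2 := mul_lt_mul_of_pos_left hcond (show 0 < 2 * m * (W * U) by positivity)
  have h3 := mul_le_mul_of_nonneg_right hc.le (sq_nonneg (U - m * s * W))
  have h4 : U ^ 2 ≤ (m * s ^ 2 * W) ^ 2 := pow_le_pow_left₀ hU.le hUL 2
  have h5 := mul_le_mul_of_nonneg_left h4 hm.le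
  have h6 : (m * s ^ 2 + m) * U ^ 2 < (m * s ^ 2 + m) * (2 * (c * T - d * (W * U))) := by
    nlinarith
  exact lt_of_mul_lt_mul_left h6 (by positivity)

lemma weighted_sum_lower {β w u : Fin n → ℝ} {b₁ b₂ : ℝ} (hb : b₁ ≤ b₂)
    (hβ : ∀ i, b₁ ≤ β i ∧ β i ≤ b₂) :
    (b₁ + b₂) / 2 * (w ⬝ᵥ u) - (b₂ - b₁) / 2 * (√(w ⬝ᵥ w) * √(u ⬝ᵥ u)) ≤
      ∑ i, β i * (w i * u i) := by
  have h1 : ∑ i, |w i| * |u i| ≤ √(w ⬝ᵥ w) * √(u ⬝ᵥ u) := by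
    have := Real.sum_mul_le_sqrt_mul_sqrt Finset.univ (fun i => |w i|) (fun i => |u i|)
    simpa [dotProduct, sq] using this
  have h2 : (b₁ + b₂) / 2 * (w ⬝ᵥ u) - (b₂ - b₁) / 2 * ∑ i, |w i| * |u i| ≤
      ∑ i, β i * (w i * u i) := by
    simp only [dotProduct, Finset.mul_sum, ← Finset.sum_sub_distrib]
    refine Finset.sum_le_sum fun i _ => ?_
    rw [← abs_mul]
    obtain ⟨hlo, hhi⟩ := hβ i
    rcases abs_cases (w i * u i) with ⟨h, hsgn⟩ | ⟨h, hsgn⟩ <;> rw [h] <;> nlinarith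
  have h3 := mul_le_mul_of_nonneg_left h1 (show 0 ≤ (b₂ - b₁) / 2 by linarith)
  linarith

/-- Spectral theorem in quadratic form: an affine inequality in `1, t, t ^ 2` that holds at all
eigenvalues `t` of `M` passes to the quadratic forms of `1, M, M ^ 2`. -/
lemma quad_form_nonneg {M : Matrix (Fin n) (Fin n) ℝ} (hM : M.IsHermitian) (a b c : ℝ)
    (h : ∀ i, 0 ≤ a + b * hM.eigenvalues i + c * hM.eigenvalues i ^ 2) (w : Fin n → ℝ) :
    0 ≤ a * (w ⬝ᵥ w) + b * (w ⬝ᵥ (M *ᵥ w)) + c * ((M *ᵥ w) ⬝ᵥ (M *ᵥ w)) := by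
  let e : Fin n → ℝ := fun i => (hM.eigenvectorBasis i).ofLp ⬝ᵥ w
  have hpars : ∀ x y : Fin n → ℝ, x ⬝ᵥ y =
      ∑ i, ((hM.eigenvectorBasis i).ofLp ⬝ᵥ x) * ((hM.eigenvectorBasis i).ofLp ⬝ᵥ y) := by
    intro x y
    have := hM.eigenvectorBasis.sum_inner_mul_inner (WithLp.toLp 2 x) (WithLp.toLp 2 y)
    simp only [EuclideanSpace.inner_eq_star_dotProduct, star_trivial] at this
    rw [dotProduct_comm x y, ← this]
    exact Finset.sum_congr rfl fun i _ => by
      rw [dotProduct_comm y]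
  have hMe : ∀ i, (hM.eigenvectorBasis i).ofLp ⬝ᵥ (M *ᵥ w) = hM.eigenvalues i * e i := by
    intro i
    have hT : Mᵀ = M := by simpa using hM.eq
    rw [dotProduct_mulVec, ← mulVec_transpose, hT, hM.mulVec_eigenvectorBasis, smul_dotProduct,
      smul_eq_mul]
  rw [hpars w w, hpars w (M *ᵥ w), hpars (M *ᵥ w) (M *ᵥ w)]
  simp only [hMe, Finset.mul_sum, ← Finset.sum_add_distrib]
  refine Finset.sum_nonneg fun i _ => ?_
  have := mul_nonneg (h i) (sq_nonneg (e i))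
  calc _ ≤ _ := this
    _ = _ := by simp only [e]; ring

lemma eigenvalue_le_spec {M : Matrix (Fin n) (Fin n) ℝ} (hM : M.IsHermitian) (i : Fin n) :
    hM.eigenvalues i ≤ spec M := by
  have h := (LinearMap.toContinuousLinearMap (Matrix.toEuclideanLin M)).le_opNorm
    (hM.eigenvectorBasis i)
  have h2 : LinearMap.toContinuousLinearMap (Matrix.toEuclideanLin M) (hM.eigenvectorBasis i)
      = hM.eigenvalues i • hM.eigenvectorBasis i := by
    ext j
    simpa [Matrix.toLpLin_apply] using congrFun (hM.mulVec_eigenvectorBasis i) j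
  rw [h2, norm_smul, hM.eigenvectorBasis.orthonormal.1 i, mul_one, mul_one] at h
  exact (le_abs_self _).trans h

lemma spec_transpose (M : Matrix (Fin n) (Fin n) ℝ) : spec Mᵀ = spec M := by
  have h := LinearMap.adjoint_toContinuousLinearMap (Matrix.toEuclideanLin M)
  have h2 : Matrix.toEuclideanLin Mᵀ = LinearMap.adjoint (Matrix.toEuclideanLin M) := by
    rw [← Matrix.toEuclideanLin_conjTranspose_eq_adjoint, conjTranspose_eq_transpose_of_trivial]
  unfold spec
  rw [h2, h]
  exact LinearIsometryEquiv.norm_map _ _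

/-- Compactness of the unit sphere turns a strict pointwise contraction into norm `< 1`. -/
lemma spec_lt_one [NeZero n] (M : Matrix (Fin n) (Fin n) ℝ)
    (h : ∀ x : Fin n → ℝ, x ≠ 0 → (M *ᵥ x) ⬝ᵥ (M *ᵥ x) < x ⬝ᵥ x) : spec M < 1 := by
  set f := LinearMap.toContinuousLinearMap (Matrix.toEuclideanLin M) with hf
  have hlt : ∀ x : EuclideanSpace ℝ (Fin n), x ≠ 0 → ‖f x‖ < ‖x‖ := by
    intro x hx
    have h1 := h x.ofLp (by simpa using hx)
    refine lt_of_pow_lt_pow_left₀ 2 (norm_nonneg _) ?_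
    rw [← real_inner_self_eq_norm_sq, ← real_inner_self_eq_norm_sq,
      EuclideanSpace.inner_eq_star_dotProduct, EuclideanSpace.inner_eq_star_dotProduct]
    simpa [f, Matrix.toLpLin_apply] using h1
  obtain ⟨z, hz, hmax⟩ := (isCompact_sphere (0 : EuclideanSpace ℝ (Fin n)) 1).exists_isMaxOn
    (NormedSpace.sphere_nonempty.mpr zero_le_one) (f.continuous.norm.continuousOn)
  have hz1 : ‖z‖ = 1 := by simpa using hz
  have hz0 : z ≠ 0 := by rintro rfl; simp at hz1
  calc spec M = ‖f‖ := rfl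
    _ ≤ ‖f z‖ := ContinuousLinearMap.opNorm_le_of_unit_norm (norm_nonneg _)
        fun x hx => hmax (by simpa using hx)
    _ < 1 := hz1 ▸ hlt z hz0

theorem stmt1 [NeZero n] (Q Γ : Matrix (Fin n) (Fin n) ℝ) (hQ : Q.PosDef)
    (kQ : ℝ) (hkQ : kQ = maxEig hQ.1 / minEig hQ.1)
    (γlower γupper : ℝ) (h0 : 0 < γlower) (hle : γlower ≤ γupper)
    (hcond : 1 / (2 * γupper * spec Q) *
      ((Real.sqrt kQ + 1) ^ 2 / Real.sqrt kQ -
        γupper / γlower * ((Real.sqrt kQ - 1) ^ 2 / Real.sqrt kQ)) > 1)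
    (γ : Fin n → ℝ) (hΓ : Γ = Matrix.diagonal γ)
    (hγ : ∀ i, γ i ∈ Set.Icc γlower γupper) :
    spec (1 - Γ * Q) < 1 := by
  obtain ⟨L, hL⟩ : ∃ L, L = maxEig hQ.1 := ⟨_, rfl⟩
  obtain ⟨m, hm⟩ : ∃ m, m = minEig hQ.1 := ⟨_, rfl⟩
  rw [← hL, ← hm] at hkQ
  have hle_L : ∀ i, hQ.1.eigenvalues i ≤ L := fun i =>
    hL ▸ le_ciSup (Set.finite_range _).bddAbove i
  have hm_le : ∀ i, m ≤ hQ.1.eigenvalues i := fun i =>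
    hm ▸ ciInf_le (Set.finite_range _).bddBelow i
  have hm0 : 0 < m := by
    obtain ⟨i, hi⟩ := exists_eq_ciInf_of_finite (f := hQ.1.eigenvalues)
    rw [hm, minEig, ← hi]
    exact hQ.eigenvalues_pos i
  have hmL : m ≤ L := (hm_le 0).trans (hle_L 0)
  have hL0 : 0 < L := hm0.trans_le hmL
  have hLspec : L ≤ spec Q := hL ▸ ciSup_le fun i => eigenvalue_le_spec hQ.1 i
  have hγu : 0 < γupper := h0.trans_le hle
  have hk0 : 0 < kQ := hkQ ▸ div_pos hL0 hm0
  obtain ⟨s, hs⟩ : ∃ s, s = √kQ := ⟨_, rfl⟩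
  rw [← hs] at hcond
  have hs0 : 0 < s := hs ▸ Real.sqrt_pos.mpr hk0
  have hLs : L = m * s ^ 2 := by
    rw [hs, Real.sq_sqrt hk0.le, hkQ]; field_simp
  have hb : 1 / γupper ≤ 1 / γlower := one_div_le_one_div_of_le h0 hle
  have hscal : (1 / γlower - 1 / γupper) / 2 * (s ^ 2 + 1) <
      s * (2 * ((1 / γupper + 1 / γlower) / 2) - m * s ^ 2) := by
    have hspec0 : 0 < spec Q := hL0.trans_le hLspec
    have h1 : 2 * γupper * L < (s + 1) ^ 2 / s - γupper / γlower * ((s - 1) ^ 2 / s) := by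
      rw [gt_iff_lt, one_div_mul_eq_div, lt_div_iff₀ (by positivity), one_mul] at hcond
      exact lt_of_le_of_lt (by gcongr) hcond
    have h2 := mul_lt_mul_of_pos_right h1 (show 0 < s / γupper by positivity)
    have e1 : 2 * γupper * L * (s / γupper) = 2 * L * s := by field_simp
    have e2 : ((s + 1) ^ 2 / s - γupper / γlower * ((s - 1) ^ 2 / s)) * (s / γupper)
        = 1 / γupper * (s + 1) ^ 2 - 1 / γlower * (s - 1) ^ 2 := by field_simp
    rw [e1, e2, hLs] at h2
    linarith
  have hT : Qᵀ = Q := by simpa using hQ.1.eq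
  rw [← spec_transpose, transpose_sub, transpose_one, transpose_mul, hT, hΓ, diagonal_transpose]
  refine spec_lt_one _ fun x hx => ?_
  have hγ0 : ∀ i, 0 < γ i := fun i => h0.trans_le (hγ i).1
  obtain ⟨w, hw⟩ : ∃ w : Fin n → ℝ, w = fun i => γ i * x i := ⟨_, rfl⟩
  have hw0 : w ≠ 0 := by
    rintro rfl
    refine hx (funext fun i => ?_)
    have := (congrFun hw i).symm
    simpa [(hγ0 i).ne'] using this
  obtain ⟨u, hu⟩ : ∃ u, u = Q *ᵥ w := ⟨_, rfl⟩
  have hwu : 0 < w ⬝ᵥ u := by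
    simpa [hu] using hQ.dotProduct_mulVec_pos hw0
  have hu0 : u ≠ 0 := by rintro rfl; simp at hwu
  have pos : ∀ v : Fin n → ℝ, v ≠ 0 → 0 < v ⬝ᵥ v := fun v hv => by
    simpa using dotProduct_star_self_pos_iff.mpr hv
  have hww := pos w hw0
  have huu := pos u hu0
  have hK : u ⬝ᵥ u + L * m * (w ⬝ᵥ w) ≤ (L + m) * (w ⬝ᵥ u) := by
    have := quad_form_nonneg hQ.1 (-(L * m)) (L + m) (-1) (fun i => by
      nlinarith [mul_nonneg (sub_nonneg.mpr (hm_le i)) (sub_nonneg.mpr (hle_L i))]) w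
    rw [← hu] at this
    linarith
  have hUL : u ⬝ᵥ u ≤ L ^ 2 * (w ⬝ᵥ w) := by
    have := quad_form_nonneg hQ.1 (L ^ 2) 0 (-1) (fun i => by
      nlinarith [hle_L i, hQ.eigenvalues_pos i]) w
    rw [← hu] at this
    linarith
  have key := scalar_ineq (W := √(w ⬝ᵥ w)) (U := √(u ⬝ᵥ u)) (T := w ⬝ᵥ u) hm0 hs0
    (show 0 ≤ (1 / γlower - 1 / γupper) / 2 by linarith) (Real.sqrt_pos.mpr hww)
    (Real.sqrt_pos.mpr huu) hscal
    (by rw [Real.sq_sqrt hww.le, Real.sq_sqrt huu.le, ← hLs]; exact hK)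
    (by
      rw [← hLs]
      refine Real.sqrt_le_iff.mpr ⟨by positivity, ?_⟩
      rwa [mul_pow, Real.sq_sqrt hww.le])
  have hsum := weighted_sum_lower (β := fun i => 1 / γ i) (w := w) (u := u) hb
    fun i => ⟨one_div_le_one_div_of_le (hγ0 i) (hγ i).2, one_div_le_one_div_of_le h0 (hγ i).1⟩
  have hxu : ∑ i, 1 / γ i * (w i * u i) = x ⬝ᵥ u := by
    refine Finset.sum_congr rfl fun i _ => ?_
    have := (hγ0 i).ne'
    rw [hw]; field_simp
  rw [hxu] at hsum
  rw [Real.sq_sqrt huu.le] at key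
  have hMx : (1 - Q * diagonal γ) *ᵥ x = x - u := by
    have : diagonal γ *ᵥ x = w := by rw [hw]; ext i; simp [mulVec_diagonal]
    rw [sub_mulVec, one_mulVec, ← mulVec_mulVec, this, hu]
  rw [hMx, sub_dotProduct, dotProduct_sub, dotProduct_sub, dotProduct_comm u x]
  linarith
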